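/- Let R be a commutative unital ℂ-algebra, c ∈ ℂ nonzero, and let ∂ be the R-derivation of the Laurent polynomial ring R[λ,λ^{-1}] with ∂(λ) = c. Fix an integer m ≥ 1 and for k = 1,…,m define the operator D_k = (-1)^{k(k+1)/2} Σ_{j=0}^{k-1} ((k-1+j)!/(2^j (k-1-j)! j!)) · (-c)^j · λ^{-(k+j)} · ∂^{k-j} on R[λ,λ^{-1}]. Then for p = Σ_{j=0}^N a_j λ^j ∈ R[λ], one has D_k p ∈ R[λ] for all k = 1,…,m if and only if a_j = 0 for all odd j with 1 ≤ j ≤ 2m-1. -/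

import Mathlib

noncomputable def bet10 (n j : ℕ) : ℂ :=
  if j ≤ n then (Nat.factorial (n + j) : ℂ) /
    (2 ^ j * (Nat.factorial (n - j) : ℂ) * (Nat.factorial j : ℂ)) else 0

theorem bet10_succ (n j : ℕ) :
    bet10 (n + 1) (j + 1) = bet10 n (j + 1) + ((n : ℂ) + 1 + j) * bet10 n j := by
  unfold bet10
  rcases lt_trichotomy j n with h | h | h
  · obtain ⟨d, rfl⟩ := Nat.exists_eq_add_of_lt h
    rw [if_pos (by omega), if_pos (by omega), if_pos (by omega)]
    have e1 : j + d + 1 + 1 + (j + 1) = (2 * j + d + 1) + 1 + 1 := by ring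
    have e2 : j + d + 1 + 1 - (j + 1) = d + 1 := by omega
    have e3 : j + d + 1 + (j + 1) = (2 * j + d + 1) + 1 := by ring
    have e4 : j + d + 1 - (j + 1) = d := by omega
    have e5 : j + d + 1 + j = 2 * j + d + 1 := by ring
    have e6 : j + d + 1 - j = d + 1 := by omega
    rw [e1, e2, e3, e4, e5, e6, Nat.factorial_succ (2 * j + d + 1 + 1),
      Nat.factorial_succ (2 * j + d + 1), Nat.factorial_succ d, Nat.factorial_succ j]
    have h1 : (Nat.factorial d : ℂ) ≠ 0 := by exact_mod_cast Nat.factorial_ne_zero d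
    have h2 : (Nat.factorial j : ℂ) ≠ 0 := by exact_mod_cast Nat.factorial_ne_zero j
    have h3 : ((d : ℂ) + 1) ≠ 0 := by exact_mod_cast Nat.succ_ne_zero d
    have h4 : ((j : ℂ) + 1) ≠ 0 := by exact_mod_cast Nat.succ_ne_zero j
    push_cast
    field_simp
    ring
  · subst h
    rw [if_pos le_rfl, if_neg (by omega), if_pos le_rfl]
    have e1 : j + 1 + (j + 1) = (j + j) + 1 + 1 := by ring
    rw [e1, Nat.sub_self, Nat.sub_self, Nat.factorial_succ (j + j + 1),
      Nat.factorial_succ (j + j), Nat.factorial_succ j]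
    have h2 : (Nat.factorial j : ℂ) ≠ 0 := by exact_mod_cast Nat.factorial_ne_zero j
    have h4 : ((j : ℂ) + 1) ≠ 0 := by exact_mod_cast Nat.succ_ne_zero j
    push_cast
    field_simp
    ring
  · rw [if_neg (by omega), if_neg (by omega), if_neg (by omega)]
    simp

theorem bet10_zero (n : ℕ) : bet10 n 0 = 1 := by
  have h1 : (Nat.factorial n : ℂ) ≠ 0 := by exact_mod_cast Nat.factorial_ne_zero n
  simp [bet10, h1]

theorem sum10 (x : ℂ) (F : ℕ → ℂ) (h0 : F 0 = 1) (hF : ∀ r, F (r + 1) = (x - r) * F r) (n : ℕ) :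
    ∑ j ∈ Finset.range (n + 1), (-1) ^ j * bet10 n j * F (n + 1 - j)
      = ∏ l ∈ Finset.range (n + 1), (x - 2 * (l : ℂ)) := by
  induction n with
  | zero => simp [bet10_zero, hF, h0]
  | succ n ih =>
    rw [Finset.prod_range_succ, ← ih, Finset.sum_range_succ']
    have hA : ∑ j ∈ Finset.range (n + 1), (-1) ^ j * bet10 n j * F (n + 2 - j)
        = ∑ j ∈ Finset.range (n + 1), (-1) ^ (j + 1) * bet10 n (j + 1) * F (n + 2 - (j + 1))
          + F (n + 2) := by
      have h1 := Finset.sum_range_succ (fun j => (-1) ^ j * bet10 n j * F (n + 2 - j)) (n + 1)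
      have h2 := Finset.sum_range_succ' (fun j => (-1) ^ j * bet10 n j * F (n + 2 - j)) (n + 1)
      have h3 : bet10 n (n + 1) = 0 := by simp [bet10]
      simp only [h3, bet10_zero] at h1 h2
      rw [h1] at h2
      simpa using h2
    have hB : (∑ j ∈ Finset.range (n + 1), (-1) ^ j * bet10 n j * F (n + 1 - j)) *
        (x - 2 * ((n + 1 : ℕ) : ℂ)) =
        ∑ j ∈ Finset.range (n + 1), (-1) ^ j * bet10 n j * F (n + 2 - j)
        - ∑ j ∈ Finset.range (n + 1), (-1) ^ j * bet10 n j * ((n : ℂ) + 1 + j) * F (n + 1 - j) := by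
      rw [Finset.sum_mul, ← Finset.sum_sub_distrib]
      refine Finset.sum_congr rfl fun j hj => ?_
      have hj' : j ≤ n := by simpa [Nat.lt_succ_iff] using hj
      obtain ⟨d, rfl⟩ := Nat.exists_eq_add_of_le hj'
      have e1 : j + d + 2 - j = d + 1 + 1 := by omega
      have e2 : j + d + 1 - j = d + 1 := by omega
      rw [e1, e2, hF (d + 1)]
      push_cast
      ring
    rw [hB, hA, bet10_zero, add_sub_right_comm, ← Finset.sum_sub_distrib]
    congr 1
    · refine Finset.sum_congr rfl fun j hj => ?_
      rw [bet10_succ]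
      have e1 : n + 1 + 1 - (j + 1) = n + 1 - j := by omega
      have e2 : n + 2 - (j + 1) = n + 1 - j := by omega
      rw [e1]
      ring
    · simp

theorem desc10 (i r : ℕ) :
    (Nat.descFactorial i (r + 1) : ℂ) = ((i : ℂ) - r) * Nat.descFactorial i r := by
  rw [Nat.descFactorial_succ]
  rcases le_or_gt r i with h | h
  · push_cast [Nat.cast_sub h]; ring
  · simp [Nat.descFactorial_of_lt h]

section
variable {R : Type*} [CommRing R] [Algebra ℂ R] (c : ℂ)
    (D : Derivation R (LaurentPolynomial R) (LaurentPolynomial R))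

open LaurentPolynomial

theorem smulCT10 (z : ℂ) (r : R) (n : ℤ) :
    z • (LaurentPolynomial.C r * T n) = LaurentPolynomial.C (z • r) * T n := by
  simp only [← single_eq_C_mul_T, AddMonoidAlgebra.smul_single]

theorem DT10
    (hD : D (LaurentPolynomial.T 1) = algebraMap ℂ (LaurentPolynomial R) c)
    (i : ℕ) (r : R) : D (LaurentPolynomial.C r * T (i : ℤ)) =
    (c * i) • (LaurentPolynomial.C r * T ((i : ℤ) - 1)) := by
  rw [← LaurentPolynomial.smul_eq_C_mul, D.map_smul]
  have : (T (i : ℤ) : LaurentPolynomial R) = T 1 ^ i := by simp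
  rw [this, D.leibniz_pow, hD]
  cases i with
  | zero => simp
  | succ i =>
    have h2 : (T 1 : LaurentPolynomial R) ^ (i + 1 - 1) = T (i : ℤ) := by simp
    have h3 : ((i + 1 : ℕ) : ℤ) - 1 = i := by push_cast; ring
    rw [h2, h3, smul_eq_mul, mul_comm, ← Algebra.smul_def, LaurentPolynomial.smul_eq_C_mul,
      mul_comm c, mul_smul, Nat.cast_smul_eq_nsmul, mul_smul_comm, mul_smul_comm]

theorem iter10
    (hD : D (LaurentPolynomial.T 1) = algebraMap ℂ (LaurentPolynomial R) c)
    (i n : ℕ) (r : R) : (⇑D)^[n] (LaurentPolynomial.C r * T (i : ℤ)) =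
    (c ^ n * (Nat.descFactorial i n : ℂ)) • (LaurentPolynomial.C r * T ((i : ℤ) - n)) := by
  induction n with
  | zero => simp
  | succ n ih =>
    rw [Function.iterate_succ_apply', ih, desc10]
    rcases le_or_gt n i with h | h
    · obtain ⟨d, rfl⟩ := Nat.exists_eq_add_of_le h
      have e : ((n + d : ℕ) : ℤ) - n = (d : ℕ) := by push_cast; ring
      have e' : ((n + d : ℕ) : ℤ) - (n + 1 : ℕ) = (d : ℤ) - 1 := by push_cast; ring
      rw [e, e', smulCT10, DT10 c D hD, smulCT10, smulCT10, smul_smul]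
      congr 3
      push_cast
      ring
    · simp [Nat.descFactorial_of_lt h]

theorem main10
    (hD : D (LaurentPolynomial.T 1) = algebraMap ℂ (LaurentPolynomial R) c)
    (n N : ℕ) (a : ℕ → R) :
    ∑ j ∈ Finset.range (n + 1),
            (((Nat.factorial (n + 1 - 1 + j) : ℂ) /
                (2 ^ j * (Nat.factorial (n + 1 - 1 - j) : ℂ) * (Nat.factorial j : ℂ))) *
              (-c) ^ j) •
              (LaurentPolynomial.T (-(((n + 1 : ℕ) : ℤ) + (j : ℤ))) *
                (⇑D)^[n + 1 - j] (∑ i ∈ Finset.range (N + 1),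
                  LaurentPolynomial.C (a i) * LaurentPolynomial.T (i : ℤ)))
    = ∑ i ∈ Finset.range (N + 1),
      (c ^ (n + 1) * ∏ l ∈ Finset.range (n + 1), ((i : ℂ) - 2 * (l : ℂ))) •
        (LaurentPolynomial.C (a i) * T ((i : ℤ) - 2 * (n + 1))) := by
  have hs : ∀ (q : ℕ) (g : ℕ → LaurentPolynomial R) (s : Finset ℕ),
      (⇑D)^[q] (∑ i ∈ s, g i) = ∑ i ∈ s, (⇑D)^[q] (g i) := by
    intro q g s
    induction q with
    | zero => rfl
    | succ q ih => simp only [Function.iterate_succ_apply', ih, map_sum]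
  simp only [hs, iter10 c D hD, Finset.mul_sum, Finset.smul_sum]
  rw [Finset.sum_comm]
  refine Finset.sum_congr rfl fun i _ => ?_
  rw [← sum10 (i : ℂ) (fun r => (Nat.descFactorial i r : ℂ)) (by simp) (desc10 i) n,
    Finset.mul_sum, Finset.sum_smul]
  refine Finset.sum_congr rfl fun j hj => ?_
  have hj' : j ≤ n := by simpa [Nat.lt_succ_iff] using hj
  rw [mul_smul_comm, T_mul, mul_T_assoc, smul_smul]
  have e : (i : ℤ) - ((n + 1 - j : ℕ) : ℤ) + -(((n + 1 : ℕ) : ℤ) + (j : ℤ))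
      = (i : ℤ) - 2 * (n + 1) := by omega
  rw [e]
  congr 1
  have e2 : c ^ (n + 1) = c ^ j * c ^ (n + 1 - j) := by
    rw [← pow_add]; congr 1; omega
  rw [e2, bet10, if_pos hj', neg_pow c j, Nat.add_sub_cancel]
  ring

theorem coeff10 (r : R) (n k : ℤ) :
    (LaurentPolynomial.C r * T n).coeff k = if n = k then r else 0 := by
  rw [← single_eq_C_mul_T, AddMonoidAlgebra.coeff_single, Finsupp.single_apply]

theorem neg10 (f : Polynomial R) (k : ℤ) (hk : k < 0) : (Polynomial.toLaurent f).coeff k = 0 := by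
  induction f using Polynomial.induction_on' with
  | add p q hp hq => rw [map_add, AddMonoidAlgebra.coeff_add, Finsupp.add_apply, hp, hq, add_zero]
  | monomial n r => rw [Polynomial.toLaurent_C_mul_T, coeff10, if_neg (by omega)]

end

/-- Proposition (commondom).  Let `R` be a commutative unital ℂ-algebra, `c ∈ ℂ`
nonzero, `D` the `R`-derivation of `R[λ,λ⁻¹]` with `D λ = c`.  For `1 ≤ k ≤ m` let
`D_k = (-1)^{k(k+1)/2} ∑_{j=0}^{k-1} ((k-1+j)!/(2^j (k-1-j)! j!)) (-c)^j λ^{-(k+j)} D^{k-j}`.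
Then for `p = ∑_{j=0}^N a_j λ^j ∈ R[λ]`, `D_k p ∈ R[λ]` for all `k = 1,…,m` iff
`a_j = 0` for all odd `j` with `1 ≤ j ≤ 2m-1`. -/
theorem stmt_10 {R : Type*} [CommRing R] [Algebra ℂ R] (c : ℂ) (hc : c ≠ 0)
    (D : Derivation R (LaurentPolynomial R) (LaurentPolynomial R))
    (hD : D (LaurentPolynomial.T 1) = algebraMap ℂ (LaurentPolynomial R) c)
    (m N : ℕ) (hm : 1 ≤ m) (a : ℕ → R) (ha : ∀ j, N < j → a j = 0) :
    (∀ k, 1 ≤ k → k ≤ m →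
      ∃ f : Polynomial R, Polynomial.toLaurent f =
        ((-1 : ℂ) ^ (k * (k + 1) / 2)) •
          ∑ j ∈ Finset.range k,
            (((Nat.factorial (k - 1 + j) : ℂ) /
                (2 ^ j * (Nat.factorial (k - 1 - j) : ℂ) * (Nat.factorial j : ℂ))) *
              (-c) ^ j) •
              (LaurentPolynomial.T (-((k : ℤ) + (j : ℤ))) *
                (⇑D)^[k - j] (∑ i ∈ Finset.range (N + 1),
                  LaurentPolynomial.C (a i) * LaurentPolynomial.T (i : ℤ))))
    ↔ (∀ j, Odd j → 1 ≤ j → j ≤ 2 * m - 1 → a j = 0) := by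
  constructor
  · rintro H j ⟨q, rfl⟩ _ hj
    by_cases hN : N < 2 * q + 1
    · exact ha _ hN
    obtain ⟨f, hf⟩ := H (q + 1) (by omega) (by omega)
    rw [main10 c D hD] at hf
    have h1 := neg10 f (-1) (by norm_num)
    rw [hf, AddMonoidAlgebra.coeff_smul_apply, AddMonoidAlgebra.coeff_sum,
      Finsupp.finsetSum_apply, Finset.sum_eq_single (2 * q + 1)] at h1
    · rw [AddMonoidAlgebra.coeff_smul_apply, coeff10, if_pos (by push_cast; ring), smul_smul] at h1
      refine (IsUnit.smul_eq_zero (IsUnit.mk0 _ ?_)).1 h1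
      refine mul_ne_zero (pow_ne_zero _ (by norm_num)) (mul_ne_zero (pow_ne_zero _ hc) ?_)
      refine Finset.prod_ne_zero_iff.2 fun l _ => ?_
      intro h
      have h' : ((2 * q + 1 : ℕ) : ℂ) = ((2 * l : ℕ) : ℂ) := by
        rw [sub_eq_zero] at h
        rw [h]; push_cast; ring
      have := Nat.cast_injective h'
      omega
    · intro b _ hb
      rw [AddMonoidAlgebra.coeff_smul_apply, coeff10, if_neg (by omega), smul_zero]
    · intro h
      exact absurd (Finset.mem_range.2 (by omega)) h
  · intro H k hk hkm
    obtain ⟨n, rfl⟩ : ∃ n, k = n + 1 := ⟨k - 1, by omega⟩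
    rw [main10 c D hD, Finset.smul_sum]
    have key : ∀ i ∈ Finset.range (N + 1), ∃ f : Polynomial R, Polynomial.toLaurent f =
        ((-1 : ℂ) ^ ((n + 1) * (n + 1 + 1) / 2)) •
        (c ^ (n + 1) * ∏ l ∈ Finset.range (n + 1), ((i : ℂ) - 2 * (l : ℂ))) •
        (LaurentPolynomial.C (a i) * LaurentPolynomial.T ((i : ℤ) - 2 * (n + 1))) := by
      intro i _
      by_cases hi : 2 * (n + 1) ≤ i
      · obtain ⟨d, rfl⟩ := Nat.exists_eq_add_of_le hi
        have e : ((2 * (n + 1) + d : ℕ) : ℤ) - 2 * (n + 1) = (d : ℕ) := by push_cast; ring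
        rw [e, smulCT10, smulCT10]
        exact ⟨_, Polynomial.toLaurent_C_mul_T _ _⟩
      · refine ⟨0, ?_⟩
        rcases Nat.even_or_odd' i with ⟨q, rfl | rfl⟩
        · rw [Finset.prod_eq_zero (i := q) (Finset.mem_range.2 (by omega)) (by push_cast; ring)]
          simp
        · rw [H (2 * q + 1) ⟨q, rfl⟩ (by omega) (by omega)]
          simp
    choose! g hg using key
    refine ⟨∑ i ∈ Finset.range (N + 1), g i, ?_⟩
    rw [map_sum]
    exact Finset.sum_congr rfl hg
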